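/- Let n ≥ 2, m ≥ 1, and let H be a Hankel tensor of order m and dimension n with parameter vector h ∈ ℂ^{d+1}, d = (n−1)m. Let m₁ = ⌈m/2⌉ and let Flat(H) be the n^{m₁} × n^{m−m₁} catalecticant flattening matrix, indexed by I ∈ (Fin n)^{m₁} and J ∈ (Fin n)^{m−m₁}, with Flat(H)_{I,J} = H(I⌢J) (the entry of H at the concatenated index). Then rank Flat(H) = rank C_{d−l,l}(h), where l = (n−1)⌊m/2⌋. -/

import Mathlib

open scoped BigOperators
open MvPolynomial

noncomputable section

/-- An order-`m`, dimension-`n` complex tensor. -/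
abbrev Tensor (m n : ℕ) := (Fin m → Fin n) → ℂ

/-- Tensors expressible as a sum of `r` rank-one tensors. -/
def cpSet (m n r : ℕ) : Set (Tensor m n) :=
  {T | ∃ u : Fin r → Fin m → Fin n → ℂ, ∀ i, T i = ∑ k, ∏ j, u k j (i j)}

/-- Tensors expressible as a sum of `r` symmetric rank-one tensors. -/
def symSet (m n r : ℕ) : Set (Tensor m n) :=
  {T | ∃ v : Fin r → Fin n → ℂ, ∀ i, T i = ∑ k, ∏ j, v k (i j)}

/-- The Vandermonde vector `v(a,b) ∈ ℂ^n`, `v(a,b)_i = a^(n-1-i) * b^i`. -/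
def vand (n : ℕ) (a b : ℂ) : Fin n → ℂ := fun i => a ^ (n - 1 - (i : ℕ)) * b ^ (i : ℕ)

/-- Tensors expressible as a sum of `r` Vandermonde rank-one tensors. -/
def vandSet (m n r : ℕ) : Set (Tensor m n) :=
  {T | ∃ ab : Fin r → ℂ × ℂ, ∀ i, T i = ∑ k, ∏ j, vand n (ab k).1 (ab k).2 (i j)}

/-- The cp rank of a tensor. -/
def cpRank {m n : ℕ} (T : Tensor m n) : ℕ := sInf {r | T ∈ cpSet m n r}

/-- The symmetric rank of a tensor. -/
def symRank {m n : ℕ} (T : Tensor m n) : ℕ := sInf {r | T ∈ symSet m n r}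

/-- The Vandermonde rank of a tensor. -/
def vandRank {m n : ℕ} (T : Tensor m n) : ℕ := sInf {r | T ∈ vandSet m n r}

/-- The border rank of a tensor (closure in the product topology). -/
def brank {m n : ℕ} (T : Tensor m n) : ℕ := sInf {r | T ∈ closure (cpSet m n r)}

/-- The symmetric border rank of a tensor. -/
def bSymRank {m n : ℕ} (T : Tensor m n) : ℕ := sInf {r | T ∈ closure (symSet m n r)}

/-- The border Vandermonde rank of a tensor. -/
def bVandRank {m n : ℕ} (T : Tensor m n) : ℕ := sInf {r | T ∈ closure (vandSet m n r)}

/-- `T` is the Hankel tensor with parameter vector `h ∈ ℂ^{(n-1)m+1}`. -/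
def IsHankel {m n : ℕ} (T : Tensor m n) (h : Fin ((n - 1) * m + 1) → ℂ) : Prop :=
  ∀ i : Fin m → Fin n, T i = h ⟨∑ j, (i j : ℕ), by
    have h1 : ∑ j, (i j : ℕ) ≤ ∑ _j : Fin m, (n - 1) :=
      Finset.sum_le_sum fun j _ => Nat.le_pred_of_lt (i j).isLt
    simp only [Finset.sum_const, Finset.card_univ, Fintype.card_fin, smul_eq_mul] at h1
    exact Nat.lt_succ_of_le (h1.trans (le_of_eq (Nat.mul_comm m (n - 1))))⟩

/-- The `(d-r+1) × (r+1)` Hankel (catalecticant) matrix `C_{d-r,r}(h)` of `h ∈ ℂ^{d+1}`. -/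
def hMat (d r : ℕ) (h : Fin (d + 1) → ℂ) : Matrix (Fin (d - r + 1)) (Fin (r + 1)) ℂ :=
  Matrix.of fun i j => if hij : (i : ℕ) + (j : ℕ) < d + 1 then h ⟨(i : ℕ) + (j : ℕ), hij⟩ else 0

/-- The binary form `f(x,y) = f_0 x^r + f_1 x^(r-1) y + ⋯ + f_r y^r`. -/
def binForm (r : ℕ) (f : Fin (r + 1) → ℂ) : MvPolynomial (Fin 2) ℂ :=
  ∑ j : Fin (r + 1), C (f j) * X 0 ^ (r - (j : ℕ)) * X 1 ^ (j : ℕ)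

/-- The binary form `h(x,y) = ∑_j binom(d,j) h_j x^j y^(d-j)` associated with `h ∈ ℂ^{d+1}`. -/
def assocForm (d : ℕ) (h : Fin (d + 1) → ℂ) : MvPolynomial (Fin 2) ℂ :=
  ∑ j : Fin (d + 1), C ((d.choose (j : ℕ) : ℂ) * h j) * X 0 ^ (j : ℕ) * X 1 ^ (d - (j : ℕ))

/-- Parameter vectors of binary forms of Waring rank at most `r`. -/
def waringSet (d r : ℕ) : Set (Fin (d + 1) → ℂ) :=
  {h | ∃ ab : Fin r → ℂ × ℂ,
    assocForm d h = ∑ i, (C (ab i).1 * X 0 + C (ab i).2 * X 1) ^ d}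

/-- The Waring rank of the binary form associated with `h`. -/
def waringRank (d : ℕ) (h : Fin (d + 1) → ℂ) : ℕ := sInf {r | h ∈ waringSet d r}

/-- The border Waring rank of the binary form associated with `h`. -/
def bWaringRank (d : ℕ) (h : Fin (d + 1) → ℂ) : ℕ := sInf {r | h ∈ closure (waringSet d r)}

/-!
The entry of `Flat(H)` at `(I, J)` depends only on the index sums `|I|` and `|J|`, and every integer
between `0` and `(n - 1) k` is the sum of some index in `(Fin n)^k`. Hence `Flat(H)` arises from
`C_{d-l,l}(h)` by repeating rows and columns, which does not change the rank.
-/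

variable {R : Type*}

/-- The sum `i_1 + ⋯ + i_k` of a `0`-based multi-index, as an element of `{0, …, (n - 1) k}`. -/
def indexSum {n k : ℕ} (i : Fin k → Fin n) : Fin ((n - 1) * k + 1) :=
  ⟨∑ j, (i j : ℕ), Nat.lt_succ_of_le <| by
    simpa [mul_comm] using Finset.sum_le_card_nsmul Finset.univ (fun j => (i j : ℕ)) (n - 1)
      fun j _ => Nat.le_pred_of_lt (i j).isLt⟩

theorem indexSum_surjective {n : ℕ} (hn : 0 < n) (k : ℕ) :
    (indexSum : (Fin k → Fin n) → Fin ((n - 1) * k + 1)).Surjective := by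
  suffices hsum : ∀ s ≤ (n - 1) * k, ∃ i : Fin k → Fin n, ∑ j, (i j : ℕ) = s from fun s =>
    (hsum s (Nat.le_of_lt_succ s.isLt)).imp fun _ hi => Fin.ext hi
  induction k with
  | zero => exact fun s hs => ⟨Fin.elim0, (Nat.le_zero.mp hs).symm⟩
  | succ k ih =>
    intro s hs
    rw [Nat.mul_succ] at hs
    obtain ⟨i, hi⟩ := ih (s - min s (n - 1)) (by omega)
    refine ⟨Fin.cons ⟨min s (n - 1), by omega⟩ i, ?_⟩
    simp only [Fin.sum_univ_succ, Fin.cons_zero, Fin.cons_succ, hi]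
    omega

/-- The concatenation `I⌢J` of two multi-indices, with its length a variable `m` so that no cast
along `m = a + b` is needed. -/
def concatIndex {n m a b : ℕ} (hm : m = a + b) (I : Fin a → Fin n) (J : Fin b → Fin n) :
    Fin m → Fin n :=
  fun t => if ht : (t : ℕ) < a then I ⟨t, ht⟩ else J ⟨(t : ℕ) - a, by omega⟩

theorem sum_concatIndex {n m a b : ℕ} (hm : m = a + b) (I : Fin a → Fin n) (J : Fin b → Fin n) :
    ∑ t, (concatIndex hm I J t : ℕ) = indexSum I + indexSum J := by
  subst hm
  simp [concatIndex, indexSum, Fin.sum_univ_add]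

/-- The flattening of an order-`m` tensor whose rows are indexed by its first `a` indices and whose
columns are indexed by its last `b` indices. -/
def flattening {n m a b : ℕ} (hm : m = a + b) (H : (Fin m → Fin n) → R) :
    Matrix (Fin a → Fin n) (Fin b → Fin n) R :=
  Matrix.of fun I J => H (concatIndex hm I J)

/-- The `(r+1) × (s+1)` Hankel matrix of a sequence, of which only the terms `h 0, …, h (r + s)`
matter. -/
def hankelMatrix (h : ℕ → R) (r s : ℕ) : Matrix (Fin (r + 1)) (Fin (s + 1)) R :=
  Matrix.of fun i j => h (i + j)

theorem flattening_eq_submatrix {n m a b : ℕ} (hm : m = a + b) {H : (Fin m → Fin n) → R}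
    {h : ℕ → R} (hH : ∀ i, H i = h (∑ j, (i j : ℕ))) :
    flattening hm H =
      (hankelMatrix h ((n - 1) * a) ((n - 1) * b)).submatrix indexSum indexSum := by
  ext I J
  exact (hH _).trans (congrArg h (sum_concatIndex hm I J))

theorem rank_submatrix_of_surjective [CommSemiring R] [StrongRankCondition R]
    {p q p' q' : Type*} [Fintype q] [Fintype q'] (A : Matrix p q R) {f : p' → p} {g : q' → q}
    (hf : f.Surjective) (hg : g.Surjective) : (A.submatrix f g).rank = A.rank := by
  obtain ⟨f', hf'⟩ := hf.hasRightInverse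
  obtain ⟨g', hg'⟩ := hg.hasRightInverse
  refine le_antisymm (A.rank_submatrix_le f g) ?_
  calc A.rank = ((A.submatrix f g).submatrix f' g').rank := by
        rw [Matrix.submatrix_submatrix, hf'.comp_eq_id, hg'.comp_eq_id, Matrix.submatrix_id_id]
    _ ≤ (A.submatrix f g).rank := Matrix.rank_submatrix_le _ f' g'

theorem stmt_7_general [CommSemiring R] [StrongRankCondition R] {n m a b : ℕ} (hn : 0 < n)
    (hm : m = a + b) {H : (Fin m → Fin n) → R} {h : ℕ → R}
    (hH : ∀ i, H i = h (∑ j, (i j : ℕ))) :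
    (flattening hm H).rank = (hankelMatrix h ((n - 1) * a) ((n - 1) * b)).rank := by
  rw [flattening_eq_submatrix hm hH]
  exact rank_submatrix_of_surjective _ (indexSum_surjective hn a) (indexSum_surjective hn b)

theorem IsHankel.apply_eq_extend {m n : ℕ} {H : Tensor m n} {h : Fin ((n - 1) * m + 1) → ℂ}
    (hH : IsHankel H h) (i : Fin m → Fin n) :
    H i = Function.extend Fin.val h 0 (∑ j, (i j : ℕ)) :=
  (hH i).trans (Fin.val_injective.extend_apply h 0 (indexSum i)).symm

theorem rank_hMat_eq_rank_hankelMatrix {d r s : ℕ} (hd : d = r + s) (h : Fin (d + 1) → ℂ) :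
    (hMat d s h).rank = (hankelMatrix (Function.extend Fin.val h 0) r s).rank := by
  obtain rfl : r = d - s := by omega
  congr 1
  ext i j
  have hij : (i : ℕ) + (j : ℕ) < d + 1 := by omega
  exact (dif_pos hij).trans (Fin.val_injective.extend_apply h 0 ⟨_, hij⟩).symm

/-- The catalecticant flattening of a Hankel tensor has the same rank
as the Hankel matrix `C_{d-l,l}(h)`, `l = (n-1)⌊m/2⌋`. -/
theorem stmt_7 (n m : ℕ) (hn : 2 ≤ n) (hm : 1 ≤ m)
    (H : Tensor m n) (h : Fin ((n - 1) * m + 1) → ℂ) (hH : IsHankel H h) :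
    (Matrix.of fun (I : Fin ((m + 1) / 2) → Fin n) (J : Fin (m - (m + 1) / 2) → Fin n) =>
        H fun t => if ht : (t : ℕ) < (m + 1) / 2 then I ⟨t, ht⟩
          else J ⟨(t : ℕ) - (m + 1) / 2, by have := t.isLt; omega⟩).rank
      = (hMat ((n - 1) * m) ((n - 1) * (m / 2)) h).rank := by
  have hsplit : m = (m + 1) / 2 + (m - (m + 1) / 2) := by omega
  have hd : (n - 1) * m = (n - 1) * ((m + 1) / 2) + (n - 1) * (m - (m + 1) / 2) := by
    rw [← mul_add, ← hsplit]
  rw [show m / 2 = m - (m + 1) / 2 by omega, rank_hMat_eq_rank_hankelMatrix hd]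
  exact stmt_7_general (by omega) hsplit hH.apply_eq_extend
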